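/- Let X ⊆ ℝ² be a bounded convex set with perimeter ℓ(∂X) = 2π, and let l > 0. Then ∫_{X \ X_l} p_X(x, l) dx ≤ 2πl − 2l. -/

import Mathlib

open MeasureTheory Metric Set Real Pointwise
open scoped ENNReal RealInnerProductSpace

noncomputable section

/-- The Euclidean plane. -/
abbrev Plane := EuclideanSpace ℝ (Fin 2)

/-- The unit vector in the plane making angle `θ` with the horizontal axis. -/
def needleDir (θ : ℝ) : Plane :=
  (EuclideanSpace.equiv (Fin 2) ℝ).symm ![Real.cos θ, Real.sin θ]

/-- The set of directions `θ ∈ [0, 2π)` for which the needle of length `l`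
originating at `x` has its other endpoint in `X`. -/
def needleAngles (X : Set Plane) (l : ℝ) (x : Plane) : Set ℝ :=
  {θ ∈ Set.Ico 0 (2 * π) | x + l • needleDir θ ∈ X}

/-- The pointwise probability `p_X(x, l)` that a random needle of length `l` at `x`
lies within `X`. -/
def pointwiseProb (X : Set Plane) (x : Plane) (l : ℝ) : ℝ :=
  (1 / (2 * π)) * (volume (needleAngles X l x)).toReal

/-- The Buffon probability `P_X(l)` that a random needle of length `l` originating at a
uniformly chosen point of `X` lies within `X`; taken to be `0` when `X` has zero area. -/
def buffonProb (X : Set Plane) (l : ℝ) : ℝ :=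
  if volume X = 0 then 0
  else (1 / (2 * π * (volume X).toReal)) *
    ∫ x in X, (volume (needleAngles X l x)).toReal

/-- The interior parallel `X_r`: the Minkowski difference of `X` with the closed ball
of radius `r`. -/
def innerParallel (X : Set Plane) (r : ℝ) : Set Plane :=
  {x : Plane | Metric.closedBall x r ⊆ X}

/-- The exterior parallel `X^r`: the Minkowski sum of `X` with the closed ball
of radius `r`. -/
def exterParallel (X : Set Plane) (r : ℝ) : Set Plane :=
  X + Metric.closedBall (0 : Plane) r

end


lemma inner_needleDir (θ φ : ℝ) : ⟪needleDir θ, needleDir φ⟫ = cos (θ - φ) := by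
  simp [needleDir, PiLp.inner_apply, Fin.sum_univ_two, Real.cos_sub]
  ring

lemma norm_needleDir (θ : ℝ) : ‖needleDir θ‖ = 1 := by
  rw [← sq_eq_sq₀ (norm_nonneg _) zero_le_one, ← real_inner_self_eq_norm_sq, inner_needleDir]
  simp

lemma continuous_needleDir : Continuous needleDir := by
  unfold needleDir
  fun_prop

lemma exists_eq_norm_smul_needleDir (a : Plane) : ∃ φ : ℝ, a = ‖a‖ • needleDir φ := by
  refine ⟨Complex.arg ⟨a 0, a 1⟩, ?_⟩
  have h : ‖a‖ = ‖(⟨a 0, a 1⟩ : ℂ)‖ := by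
    rw [EuclideanSpace.norm_eq, Complex.norm_def, Complex.normSq_apply]
    simp [Fin.sum_univ_two, sq]
  ext i
  fin_cases i
  · simp [needleDir, h]
  · simp [needleDir, h]

/-- Coordinates along and (up to reflection and translation) across the direction `φ`. -/
lemma measurePreserving_needleDir_coords (φ c : ℝ) :
    MeasurePreserving (fun x : Plane ↦
      ((⟪needleDir (φ + π / 2), x⟫ : ℝ), c - (⟪needleDir φ, x⟫ : ℝ))) := by
  have hon : Orthonormal ℝ ![needleDir (φ + π / 2), needleDir φ] := by
    rw [orthonormal_iff_ite]
    intro i j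
    fin_cases i <;> fin_cases j <;> simp [inner_needleDir, norm_needleDir]
  let b : OrthonormalBasis (Fin 2) ℝ Plane := OrthonormalBasis.mk hon (by
    rw [top_le_iff]
    exact hon.linearIndependent.span_eq_top_of_card_eq_finrank (by simp))
  have h := ((MeasurePreserving.id (volume : Measure ℝ)).prod
    (Measure.measurePreserving_sub_left volume c)).comp
    ((volume_preserving_finTwoArrow ℝ).comp
      ((PiLp.volume_preserving_ofLp (Fin 2)).comp b.measurePreserving_repr))
  refine (congrArg (MeasurePreserving · volume volume) ?_).mp h
  funext x
  simp [b, MeasurableEquiv.finTwoArrow, OrthonormalBasis.repr_apply_apply]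

lemma integral_posPart_cos (φ : ℝ) : ∫ θ in (0 : ℝ)..(2 * π), max 0 (cos (θ - φ)) = 2 := by
  have hper : Function.Periodic (fun θ ↦ max 0 (cos θ)) (2 * π) := fun θ ↦ by simp
  have hint : ∀ a b, IntervalIntegrable (fun θ ↦ max 0 (cos θ)) volume a b := fun a b ↦
    (by fun_prop : Continuous fun θ ↦ max 0 (cos θ)).intervalIntegrable a b
  have h1 : ∫ θ in (-(π / 2))..(π / 2), max 0 (cos θ) = 2 := by
    rw [intervalIntegral.integral_congr (g := cos)]
    · simp
      norm_num
    · intro θ hθ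
      rw [uIcc_of_le (by linarith [pi_pos])] at hθ
      exact max_eq_right (cos_nonneg_of_mem_Icc hθ)
  have h2 : ∫ θ in (π / 2)..(-(π / 2) + 2 * π), max 0 (cos θ) = 0 := by
    rw [intervalIntegral.integral_congr (g := fun _ ↦ 0)]
    · simp
    · intro θ hθ
      rw [uIcc_of_le (by linarith [pi_pos])] at hθ
      exact max_eq_left (cos_nonpos_of_pi_div_two_le_of_le hθ.1 (by linarith [hθ.2]))
  rw [intervalIntegral.integral_comp_sub_right (fun θ ↦ max 0 (cos θ)),
    show 2 * π - φ = (0 - φ) + 2 * π by ring,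
    hper.intervalIntegral_add_eq (0 - φ) (-(π / 2)),
    ← intervalIntegral.integral_add_adjacent_intervals (hint _ (π / 2)) (hint _ _), h1, h2,
    add_zero]

lemma lintegral_volume_mul_cos_le (φ : ℝ) {l : ℝ} (hl : 0 ≤ l) :
    ∫⁻ t in Icc 0 l, volume {θ ∈ Ico 0 (2 * π) | l * cos (θ - φ) ≤ t} ≤
      ENNReal.ofReal (2 * π * l - 2 * l) := by
  have hM : MeasurableSet {p : ℝ × ℝ | p.1 ∈ Icc 0 l ∧ p.2 ∈ Ico 0 (2 * π) ∧
      l * cos (p.2 - φ) ≤ p.1} := by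
    refine (measurable_fst measurableSet_Icc).inter ((measurable_snd measurableSet_Ico).inter ?_)
    exact measurableSet_le (f := fun p : ℝ × ℝ ↦ l * cos (p.2 - φ)) (by fun_prop) measurable_fst
  calc ∫⁻ t in Icc 0 l, volume {θ ∈ Ico 0 (2 * π) | l * cos (θ - φ) ≤ t}
      = volume {p : ℝ × ℝ | p.1 ∈ Icc 0 l ∧ p.2 ∈ Ico 0 (2 * π) ∧ l * cos (p.2 - φ) ≤ p.1} := by
        rw [Measure.volume_eq_prod, Measure.prod_apply hM, ← lintegral_indicator measurableSet_Icc]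
        congr with t
        by_cases ht : t ∈ Icc 0 l
        · simp only [indicator_of_mem ht, preimage_ofPred_eq, ht, true_and]
        · simp only [indicator_of_notMem ht, preimage_ofPred_eq, ht, false_and, ofPred_false,
            measure_empty]
    _ = ∫⁻ θ, volume {t : ℝ | t ∈ Icc 0 l ∧ θ ∈ Ico 0 (2 * π) ∧ l * cos (θ - φ) ≤ t} := by
        rw [Measure.volume_eq_prod, Measure.prod_apply_symm hM]
        rfl
    _ ≤ ∫⁻ θ in Ioc 0 (2 * π), ENNReal.ofReal (l - l * max 0 (cos (θ - φ))) := by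
        rw [← restrict_Ico_eq_restrict_Ioc, ← lintegral_indicator measurableSet_Ico]
        refine lintegral_mono fun θ ↦ ?_
        by_cases hθ : θ ∈ Ico 0 (2 * π)
        · rw [indicator_of_mem hθ, ← Real.volume_Icc]
          refine measure_mono fun t ht ↦ ⟨?_, ht.1.2⟩
          rw [mul_max_of_nonneg _ _ hl, mul_zero]
          exact max_le ht.1.1 ht.2.2
        · simp [hθ]
    _ = ENNReal.ofReal (2 * π * l - 2 * l) := by
        have hc : Continuous fun θ ↦ max 0 (cos (θ - φ)) := by fun_prop
        rw [← ofReal_integral_eq_lintegral_ofReal,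
          ← intervalIntegral.integral_of_le two_pi_pos.le, intervalIntegral.integral_sub,
          intervalIntegral.integral_const, intervalIntegral.integral_const_mul,
          integral_posPart_cos]
        · simp
          ring_nf
        · simp
        · exact (continuous_const.mul hc).intervalIntegrable _ _
        · exact (((continuous_const.sub (continuous_const.mul hc)).integrableOn_Icc).mono_set
            Ioc_subset_Icc_self)
        · exact ae_of_all _ fun θ ↦ sub_nonneg.2
            (mul_le_of_le_one_right hl (max_le zero_le_one (cos_le_one _)))

lemma lintegral_strip_le (φ c : ℝ) {l : ℝ} (hl : 0 ≤ l) {T : Set ℝ} (hT : MeasurableSet T) :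
    ∫⁻ x in {x : Plane | ⟪needleDir (φ + π / 2), x⟫ ∈ T ∧ c - ⟪needleDir φ, x⟫ ∈ Icc 0 l},
      volume {θ ∈ Ico 0 (2 * π) | l * cos (θ - φ) ≤ c - ⟪needleDir φ, x⟫} ≤
      volume T * ENNReal.ofReal (2 * π * l - 2 * l) := by
  set G : ℝ → ℝ≥0∞ := fun t ↦ volume {θ ∈ Ico 0 (2 * π) | l * cos (θ - φ) ≤ t} with hG
  have hGm : Measurable G := Monotone.measurable fun s t hst ↦
    measure_mono fun θ hθ ↦ ⟨hθ.1, hθ.2.trans hst⟩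
  calc _ = ∫⁻ p in T ×ˢ Icc 0 l, G p.2 :=
        (measurePreserving_needleDir_coords φ c).setLIntegral_comp_preimage
          (hT.prod measurableSet_Icc) (hGm.comp measurable_snd)
    _ = volume T * ∫⁻ t in Icc 0 l, G t := by
        rw [Measure.volume_eq_prod, ← Measure.prod_restrict,
          lintegral_prod (fun p : ℝ × ℝ ↦ G p.2) (hGm.comp measurable_snd).aemeasurable]
        simp [mul_comm]
    _ ≤ _ := by
        gcongr
        exact lintegral_volume_mul_cos_le φ hl

/-- The intersection of the half-planes `⟪a, z - x₀⟫ ≤ 1`, for `a ∈ S`. -/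
def polygon (S : Finset Plane) (x₀ : Plane) : Set Plane :=
  {z | ∀ a ∈ S, ⟪a, z - x₀⟫ ≤ 1}

/-- The edge of `polygon S x₀` in the line `⟪a, z - x₀⟫ = 1`. -/
def polygonEdge (S : Finset Plane) (x₀ a : Plane) : Set Plane :=
  {z ∈ polygon S x₀ | ⟪a, z - x₀⟫ = 1}

lemma isClosed_polygon (S : Finset Plane) (x₀ : Plane) : IsClosed (polygon S x₀) := by
  simp only [polygon, ofPred_forall]
  exact isClosed_biInter fun a _ ↦ isClosed_le (by fun_prop) continuous_const

lemma convex_polygon (S : Finset Plane) (x₀ : Plane) : Convex ℝ (polygon S x₀) := by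
  intro z hz w hw s t hs ht hst a ha
  have h : s • z + t • w - x₀ = s • (z - x₀) + t • (w - x₀) := by
    rw [← eq_sub_iff_add_eq'] at hst
    rw [hst]
    module
  rw [h, inner_add_right, real_inner_smul_right, real_inner_smul_right]
  nlinarith [hz a ha, hw a ha]

lemma isClosed_polygonEdge (S : Finset Plane) (x₀ a : Plane) : IsClosed (polygonEdge S x₀ a) :=
  (isClosed_polygon S x₀).inter (isClosed_eq (by fun_prop) continuous_const)

lemma polygonEdge_subset_frontier {S : Finset Plane} {x₀ a : Plane} (ha : a ∈ S) :
    polygonEdge S x₀ a ⊆ frontier (polygon S x₀) := by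
  rintro z ⟨hz, haz⟩
  rw [(isClosed_polygon S x₀).frontier_eq]
  refine ⟨hz, fun hzi ↦ ?_⟩
  have hcont : Filter.Tendsto (fun t : ℝ ↦ z + t • a) (nhdsWithin 0 (Ioi 0)) (nhds z) := by
    refine Filter.Tendsto.mono_left ?_ nhdsWithin_le_nhds
    exact Continuous.tendsto' (by fun_prop) _ _ (by simp)
  obtain ⟨t, ht, htpos⟩ := ((hcont.eventually (mem_interior_iff_mem_nhds.1 hzi)).and
    self_mem_nhdsWithin).exists
  have h1 : ⟪a, z + t • a - x₀⟫ ≤ 1 := ht a ha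
  rw [add_sub_right_comm, inner_add_right, haz, real_inner_smul_right,
    real_inner_self_eq_norm_sq] at h1
  have ha0 : a ≠ 0 := by
    rintro rfl
    simp at haz
  have := mul_pos (mem_Ioi.1 htpos) (pow_pos (norm_pos_iff.2 ha0) 2)
  linarith

lemma polygonEdge_inter_subsingleton {S : Finset Plane} {x₀ a b : Plane} (hab : a ≠ b) :
    (polygonEdge S x₀ a ∩ polygonEdge S x₀ b).Subsingleton := by
  rintro z ⟨⟨-, haz⟩, ⟨-, hbz⟩⟩ w ⟨⟨-, haw⟩, ⟨-, hbw⟩⟩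
  simp only [PiLp.inner_apply, Fin.sum_univ_two, PiLp.sub_apply, RCLike.inner_apply,
    conj_trivial] at haz hbz haw hbw
  set z₀ := z 0 - x₀ 0
  set z₁ := z 1 - x₀ 1
  set w₀ := w 0 - x₀ 0
  set w₁ := w 1 - x₀ 1
  have h0 : (z₀ * w₁ - z₁ * w₀) * (a 0 - b 0) = 0 := by
    linear_combination w₁ * haz - w₁ * hbz - z₁ * haw + z₁ * hbw
  have h1 : (z₀ * w₁ - z₁ * w₀) * (a 1 - b 1) = 0 := by
    linear_combination -w₀ * haz + w₀ * hbz + z₀ * haw - z₀ * hbw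
  by_cases hdet : z₀ * w₁ - z₁ * w₀ = 0
  · ext i
    fin_cases i
    · have : z₀ = w₀ := by linear_combination (-z₀) * haw + w₀ * haz + a 1 * hdet
      simpa [z₀, w₀] using this
    · have : z₁ = w₁ := by linear_combination (-z₁) * haw + w₁ * haz - a 0 * hdet
      simpa [z₁, w₁] using this
  · refine absurd ?_ hab
    ext i
    fin_cases i
    · simpa [hdet, sub_eq_zero] using h0
    · simpa [hdet, sub_eq_zero] using h1

lemma sum_hausdorffMeasure_polygonEdge_le (S : Finset Plane) (x₀ : Plane) :
    ∑ a ∈ S, μH[1] (polygonEdge S x₀ a) ≤ μH[1] (frontier (polygon S x₀)) := by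
  have := Measure.nullSingletonClass_hausdorff Plane one_pos
  rw [← measure_biUnion_finset₀
    (fun a _ b _ hab ↦ (polygonEdge_inter_subsingleton hab).measure_zero _)
    fun a _ ↦ (isClosed_polygonEdge S x₀ a).measurableSet.nullMeasurableSet]
  exact measure_mono (iUnion₂_subset fun a ha ↦ polygonEdge_subset_frontier ha)

/-- The points of `polygon S x₀` at distance at most `l` from the line through the edge
normal to `a`, this line being the nearest one. -/
def polygonCell (S : Finset Plane) (x₀ a : Plane) (l : ℝ) : Set Plane :=
  {z ∈ polygon S x₀ | (1 - ⟪a, z - x₀⟫) / ‖a‖ ≤ l ∧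
    ∀ b ∈ S, (1 - ⟪a, z - x₀⟫) / ‖a‖ ≤ (1 - ⟪b, z - x₀⟫) / ‖b‖}

lemma lintegral_polygonCell_le {S : Finset Plane} {x₀ a : Plane} (hS : ∀ a ∈ S, a ≠ 0)
    (hbdd : Bornology.IsBounded (polygon S x₀)) (ha : a ∈ S) {l : ℝ} (hl : 0 ≤ l) :
    ∫⁻ x in polygonCell S x₀ a l, volume (needleAngles (polygon S x₀) l x) ≤
      μH[1] (polygonEdge S x₀ a) * ENNReal.ofReal (2 * π * l - 2 * l) := by
  obtain ⟨φ, hφ⟩ := exists_eq_norm_smul_needleDir a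
  have ha0 : 0 < ‖a‖ := norm_pos_iff.2 (hS a ha)
  set c : ℝ := 1 / ‖a‖ + ⟪needleDir φ, x₀⟫ with hc
  have hinner : ∀ v, ⟪a, v⟫ = ‖a‖ * ⟪needleDir φ, v⟫ := fun v ↦ by
    conv_lhs => rw [hφ]
    rw [real_inner_smul_left]
  have hdist : ∀ x, (1 - ⟪a, x - x₀⟫) / ‖a‖ = c - ⟪needleDir φ, x⟫ := fun x ↦ by
    rw [hinner, inner_sub_right, hc]
    field_simp
    ring
  set T : Set ℝ := (fun x ↦ ⟪needleDir (φ + π / 2), x⟫) '' polygonEdge S x₀ a with hT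
  have hTm : MeasurableSet T := by
    have hK : IsCompact (polygonEdge S x₀ a) :=
      Metric.isCompact_of_isClosed_isBounded (isClosed_polygonEdge S x₀ a)
        (hbdd.subset (sep_subset _ _))
    exact (hK.image (by fun_prop)).isClosed.measurableSet
  have hTvol : volume T ≤ μH[1] (polygonEdge S x₀ a) := by
    have hlip : LipschitzWith 1 (fun x : Plane ↦ (⟪needleDir (φ + π / 2), x⟫ : ℝ)) := by
      refine LipschitzWith.of_dist_le_mul fun x y ↦ ?_
      rw [Real.dist_eq, ← inner_sub_right, dist_eq_norm]
      simpa [norm_needleDir] using abs_real_inner_le_norm (needleDir (φ + π / 2)) (x - y)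
    rw [← hausdorffMeasure_real]
    simpa using hlip.hausdorffMeasure_image_le zero_le_one (polygonEdge S x₀ a)
  calc _ ≤ ∫⁻ x in polygonCell S x₀ a l,
        volume {θ ∈ Ico 0 (2 * π) | l * cos (θ - φ) ≤ c - ⟪needleDir φ, x⟫} := by
        refine lintegral_mono fun x ↦ measure_mono ?_
        rintro θ ⟨hθ, hx⟩
        refine ⟨hθ, ?_⟩
        have h := div_nonneg (sub_nonneg.2 (hx a ha)) ha0.le
        rw [hdist, inner_add_right, real_inner_smul_right, inner_needleDir,
          ← cos_neg, neg_sub] at h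
        linarith
    _ ≤ ∫⁻ x in {x : Plane | ⟪needleDir (φ + π / 2), x⟫ ∈ T ∧ c - ⟪needleDir φ, x⟫ ∈ Icc 0 l},
        volume {θ ∈ Ico 0 (2 * π) | l * cos (θ - φ) ≤ c - ⟪needleDir φ, x⟫} := by
        refine lintegral_mono_set ?_
        rintro x ⟨hx, hxl, hxmin⟩
        have hx0 := div_nonneg (sub_nonneg.2 (hx a ha)) ha0.le
        rw [hdist] at hxl hx0
        refine ⟨⟨x + (c - ⟪needleDir φ, x⟫) • needleDir φ, ⟨fun b hb ↦ ?_, ?_⟩, ?_⟩, hx0, hxl⟩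
        · have hb0 : 0 < ‖b‖ := norm_pos_iff.2 (hS b hb)
          have h := hxmin b hb
          rw [hdist, le_div_iff₀ hb0] at h
          have hcs := real_inner_le_norm b (needleDir φ)
          rw [norm_needleDir, mul_one] at hcs
          rw [add_sub_right_comm, inner_add_right, real_inner_smul_right]
          nlinarith
        · have h := hdist (x + (c - ⟪needleDir φ, x⟫) • needleDir φ)
          rw [inner_add_right (needleDir φ), real_inner_smul_right, inner_needleDir] at h
          simp only [sub_self, cos_zero, mul_one, add_sub_cancel] at h
          rw [div_eq_zero_iff] at h
          rcases h with h | h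
          · linarith
          · exact absurd h ha0.ne'
        · simp [inner_add_right, real_inner_smul_right, inner_needleDir]
    _ ≤ _ := (lintegral_strip_le φ c hl hTm).trans (by gcongr)

lemma lintegral_polygon_le {S : Finset Plane} {x₀ : Plane} (hS : ∀ a ∈ S, a ≠ 0)
    (hbdd : Bornology.IsBounded (polygon S x₀)) {l : ℝ} (hl : 0 ≤ l) :
    ∫⁻ x in polygon S x₀ \ innerParallel (polygon S x₀) l,
        volume (needleAngles (polygon S x₀) l x) ≤
      μH[1] (frontier (polygon S x₀)) * ENNReal.ofReal (2 * π * l - 2 * l) := by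
  have hsub : polygon S x₀ \ innerParallel (polygon S x₀) l ⊆
      ⋃ a : S, polygonCell S x₀ a l := by
    rintro z ⟨hz, hzl⟩
    obtain ⟨w, hw, hwP⟩ := not_subset.1 hzl
    simp only [polygon, mem_ofPred_eq, not_forall, not_le] at hwP
    obtain ⟨b, hb, hbw⟩ := hwP
    have hb0 : 0 < ‖b‖ := norm_pos_iff.2 (hS b hb)
    have hbl : (1 - ⟪b, z - x₀⟫) / ‖b‖ ≤ l := by
      rw [div_le_iff₀ hb0]
      have hcs := real_inner_le_norm b (w - z)
      rw [mem_closedBall, dist_eq_norm] at hw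
      have hwz : ⟪b, w - x₀⟫ = ⟪b, w - z⟫ + ⟪b, z - x₀⟫ := by
        rw [← inner_add_right, sub_add_sub_cancel]
      nlinarith
    obtain ⟨a, ha, hmin⟩ := S.exists_min_image (fun a ↦ (1 - ⟪a, z - x₀⟫) / ‖a‖) ⟨b, hb⟩
    exact mem_iUnion.2 ⟨⟨a, ha⟩, hz, (hmin b hb).trans hbl, hmin⟩
  calc _ ≤ ∑' a : S, ∫⁻ x in polygonCell S x₀ a l, volume (needleAngles (polygon S x₀) l x) :=
        (lintegral_mono_set hsub).trans (lintegral_iUnion_le _ _)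
    _ = ∑ a ∈ S, ∫⁻ x in polygonCell S x₀ a l, volume (needleAngles (polygon S x₀) l x) :=
        Finset.tsum_subtype S fun a ↦
          ∫⁻ x in polygonCell S x₀ a l, volume (needleAngles (polygon S x₀) l x)
    _ ≤ ∑ a ∈ S, μH[1] (polygonEdge S x₀ a) * ENNReal.ofReal (2 * π * l - 2 * l) :=
        Finset.sum_le_sum fun a ha ↦ lintegral_polygonCell_le hS hbdd ha hl
    _ ≤ _ := by
        rw [← Finset.sum_mul]
        gcongr
        exact sum_hausdorffMeasure_polygonEdge_le S x₀

lemma IsPreconnected.subset_interior_of_inter_closure {E : Type*} [TopologicalSpace E]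
    {s X : Set E} (hs : IsPreconnected s) (hfr : Disjoint s (frontier X))
    (hne : (s ∩ closure X).Nonempty) : s ⊆ interior X := by
  refine hs.subset_left_of_subset_union isOpen_interior isClosed_closure.isOpen_compl
    (disjoint_compl_right.mono_left (interior_subset.trans subset_closure)) (fun x hx ↦ ?_) ?_
  · by_contra hcon
    simp only [mem_union, mem_compl_iff, not_or, not_not] at hcon
    exact disjoint_left.1 hfr hx ⟨hcon.2, hcon.1⟩
  · obtain ⟨x, hx, hxX⟩ := hne
    refine ⟨x, hx, ?_⟩
    by_contra hcon
    exact disjoint_left.1 hfr hx ⟨hxX, hcon⟩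

/-- The nearest-point projection onto a closed convex set with nonempty interior maps the frontier
of any bounded larger set onto the frontier of the convex set. -/
lemma hausdorffMeasure_frontier_mono {E : Type*} [NormedAddCommGroup E] [InnerProductSpace ℝ E]
    [CompleteSpace E] [MeasurableSpace E] [BorelSpace E] {P X : Set E} (hPc : Convex ℝ P)
    (hPcl : IsClosed P) (hPi : (interior P).Nonempty) (hPX : P ⊆ X) (hX : Bornology.IsBounded X)
    {d : ℝ} (hd : 0 ≤ d) : μH[d] (frontier P) ≤ μH[d] (frontier X) := by
  have hproj : ∀ u : E, ∃ v ∈ P, ∀ w ∈ P, ⟪u - v, w - v⟫ ≤ 0 := fun u ↦ by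
    obtain ⟨v, hv, h⟩ := exists_norm_eq_iInf_of_complete_convex (hPi.mono interior_subset)
      hPcl.isComplete hPc u
    exact ⟨v, hv, (norm_eq_iInf_iff_real_inner_le_zero hPc hv).1 h⟩
  choose p hpP hp using hproj
  have hmono : ∀ u v, ‖p u - p v‖ ^ 2 ≤ ⟪u - v, p u - p v⟫ := fun u v ↦ by
    have h1 := hp u (p v) (hpP v)
    have h2 := hp v (p u) (hpP u)
    have h3 : ⟪u - v, p u - p v⟫ - ‖p u - p v‖ ^ 2 =
        -⟪u - p u, p v - p u⟫ - ⟪v - p v, p u - p v⟫ := by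
      rw [← real_inner_self_eq_norm_sq, ← inner_sub_left, ← neg_sub (p u) (p v), inner_neg_right,
        neg_neg, ← inner_sub_left]
      congr 1
      abel
    linarith
  have hlip : LipschitzWith 1 p := by
    refine LipschitzWith.of_dist_le_mul fun u v ↦ ?_
    rw [dist_eq_norm, dist_eq_norm, NNReal.coe_one, one_mul]
    by_contra! hlt
    have := (hmono u v).trans (real_inner_le_norm _ _)
    nlinarith [norm_nonneg (u - v)]
  have hsurj : frontier P ⊆ p '' frontier X := by
    intro y hy
    have hyP : y ∈ P := hPcl.frontier_subset hy
    obtain ⟨f, hf⟩ := geometric_hahn_banach_open_point hPc.interior isOpen_interior hy.2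
    have hfP : ∀ w ∈ P, f w ≤ f y := fun w hw ↦ by
      have hw' : w ∈ closure (interior P) := by
        rw [hPc.closure_interior_eq_closure_of_nonempty_interior hPi]
        exact subset_closure hw
      exact closure_minimal (fun z hz ↦ (hf z hz).le)
        (isClosed_le f.continuous continuous_const) hw'
    set n := (InnerProductSpace.toDual ℝ E).symm f with hn
    have hnf : ∀ v, ⟪n, v⟫ = f v := fun v ↦ InnerProductSpace.toDual_symm_apply
    have hn0 : 0 < ‖n‖ := by
      obtain ⟨z, hz⟩ := hPi
      refine norm_pos_iff.2 fun h0 ↦ ?_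
      have := hf z hz
      rw [← hnf, ← hnf, h0, inner_zero_left, inner_zero_left] at this
      exact lt_irrefl _ this
    have hray : ∃ s : ℝ, 0 ≤ s ∧ y + s • n ∈ frontier X := by
      by_contra! hcon
      have hconn : IsPreconnected ((fun s : ℝ ↦ y + s • n) '' Ici 0) :=
        isPreconnected_Ici.image _ (by fun_prop)
      have hsub : (fun s : ℝ ↦ y + s • n) '' Ici 0 ⊆ interior X := by
        refine hconn.subset_interior_of_inter_closure ?_
          ⟨y, ⟨0, self_mem_Ici, by simp⟩, subset_closure (hPX hyP)⟩
        rw [disjoint_left]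
        rintro _ ⟨s, hs, rfl⟩
        exact hcon s hs
      obtain ⟨C, hC⟩ := hX.exists_norm_le
      have hC0 : 0 ≤ C := (norm_nonneg y).trans (hC y (hPX hyP))
      have hs0 : 0 ≤ (C + ‖y‖ + 1) / ‖n‖ := by positivity
      have h1 := hC _ (interior_subset (hsub ⟨_, hs0, rfl⟩))
      have h2 := norm_sub_le (y + ((C + ‖y‖ + 1) / ‖n‖) • n) y
      rw [add_sub_cancel_left, norm_smul, Real.norm_of_nonneg hs0,
        div_mul_cancel₀ _ hn0.ne'] at h2
      linarith
    obtain ⟨s, hs, hsX⟩ := hray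
    refine ⟨_, hsX, ?_⟩
    have h1 := hp (y + s • n) y hyP
    have h2 : ⟪s • n, p (y + s • n) - y⟫ ≤ 0 := by
      rw [real_inner_smul_left, hnf, map_sub]
      exact mul_nonpos_of_nonneg_of_nonpos hs (sub_nonpos.2 (hfP _ (hpP _)))
    have h3 : ‖p (y + s • n) - y‖ ^ 2 =
        ⟪y + s • n - p (y + s • n), y - p (y + s • n)⟫ + ⟪s • n, p (y + s • n) - y⟫ := by
      rw [← real_inner_self_eq_norm_sq, ← neg_sub (p (y + s • n)) y, inner_neg_right,
        ← inner_neg_left, ← inner_add_left]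
      congr 1
      abel
    have h4 : ‖p (y + s • n) - y‖ = 0 := by
      rw [← sq_eq_zero_iff]
      exact le_antisymm (by linarith) (sq_nonneg _)
    exact sub_eq_zero.1 (norm_eq_zero.1 h4)
  calc μH[d] (frontier P) ≤ μH[d] (p '' frontier X) := measure_mono hsurj
    _ ≤ μH[d] (frontier X) := by simpa using hlip.hausdorffMeasure_image_le hd (frontier X)

lemma exists_isCompact_convex_subset_interior {E : Type*} [NormedAddCommGroup E]
    [NormedSpace ℝ E] [FiniteDimensional ℝ E] {U K : Set E} (hU : Convex ℝ U) (hUo : IsOpen U)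
    (hK : IsCompact K) (hKU : K ⊆ U) :
    ∃ C, IsCompact C ∧ Convex ℝ C ∧ K ⊆ interior C ∧ C ⊆ U := by
  have hloc : ∀ k ∈ K, ∃ u : Finset E, k ∈ interior (convexHull ℝ (u : Set E)) ∧
      convexHull ℝ (u : Set E) ⊆ U := fun k hk ↦ by
    obtain ⟨u, hu, huU⟩ := (convex_singleton k).exists_subset_interior_convexHull_finset_of_isCompact
      isCompact_singleton (by simpa using hUo.mem_nhds (hKU hk) : U ∈ nhdsSet {k})
    exact ⟨u, hu rfl, huU⟩
  choose! u hu huU using hloc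
  obtain ⟨t, htK, hcov⟩ := hK.elim_nhds_subcover (fun k ↦ interior (convexHull ℝ (u k : Set E)))
    fun k hk ↦ isOpen_interior.mem_nhds (hu k hk)
  have hfin : (⋃ k ∈ t, (u k : Set E)).Finite := t.finite_toSet.biUnion fun k _ ↦ (u k).finite_toSet
  refine ⟨convexHull ℝ (⋃ k ∈ t, (u k : Set E)), hfin.isCompact_convexHull ℝ,
    convex_convexHull ℝ _, fun k hk ↦ ?_, convexHull_min (iUnion₂_subset fun k hk ↦
      (subset_convexHull ℝ _).trans (huU k (htK k hk))) hU⟩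
  obtain ⟨j, hj, hkj⟩ := mem_iUnion₂.1 (hcov hk)
  exact interior_mono (convexHull_mono (subset_biUnion_of_mem (u := fun k ↦ (u k : Set E)) hj)) hkj

lemma exists_polygon_subset {X : Set Plane} (hXb : Bornology.IsBounded X) (hXc : Convex ℝ X)
    {x₀ : Plane} (hx₀ : x₀ ∈ interior X) {ε : ℝ≥0∞} (hε : ε ≠ 0) :
    ∃ S : Finset Plane, (∀ a ∈ S, a ≠ 0) ∧ polygon S x₀ ⊆ X ∧ x₀ ∈ interior (polygon S x₀) ∧
      volume (closure X \ polygon S x₀) ≤ ε := by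
  obtain ⟨K, hKX, hK, hKvol⟩ := (isOpen_interior (s := X)).measurableSet.exists_isCompact_sdiff_lt
    (μ := volume) (hXb.subset interior_subset).measure_lt_top.ne hε
  obtain ⟨C, hC, hCc, hKC, hCX⟩ := exists_isCompact_convex_subset_interior hXc.interior
    isOpen_interior (hK.insert x₀) (insert_subset hx₀ hKX)
  have hx₀C : x₀ ∈ C := interior_subset (hKC (mem_insert _ _))
  have hsep : ∀ z ∈ frontier X, ∃ a : Plane, a ≠ 0 ∧ (∀ c ∈ C, ⟪a, c - x₀⟫ ≤ 1) ∧
      1 < ⟪a, z - x₀⟫ := fun z hz ↦ by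
    obtain ⟨f, u, hfC, hfz⟩ := geometric_hahn_banach_closed_point hCc hC.isClosed
      (fun h ↦ hz.2 (hCX h))
    have hu : 0 < u - f x₀ := sub_pos.2 (hfC x₀ hx₀C)
    have ha : ∀ v, ⟪(u - f x₀)⁻¹ • (InnerProductSpace.toDual ℝ Plane).symm f, v - x₀⟫ =
        (f v - f x₀) / (u - f x₀) := fun v ↦ by
      rw [real_inner_smul_left, InnerProductSpace.toDual_symm_apply, map_sub, inv_mul_eq_div]
    have hz1 : 1 < ⟪(u - f x₀)⁻¹ • (InnerProductSpace.toDual ℝ Plane).symm f, z - x₀⟫ := by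
      rw [ha, one_lt_div hu]
      linarith
    refine ⟨_, fun h0 ↦ ?_, fun c hc ↦ ?_, hz1⟩
    · rw [h0, inner_zero_left] at hz1
      exact absurd hz1 (by norm_num)
    · rw [ha, div_le_one hu]
      linarith [hfC c hc]
  choose! a ha0 haC haz using hsep
  have hfr : IsCompact (frontier X) := Metric.isCompact_of_isClosed_isBounded isClosed_frontier
    (hXb.closure.subset frontier_subset_closure)
  obtain ⟨t, ht, hcov⟩ := hfr.elim_nhds_subcover (fun z ↦ {w | 1 < ⟪a z, w - x₀⟫})
    fun z hz ↦ (isOpen_lt continuous_const (by fun_prop)).mem_nhds (haz z hz)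
  classical
  have hCP : C ⊆ polygon (t.image a) x₀ := fun c hc b hb ↦ by
    obtain ⟨z, hz, rfl⟩ := Finset.mem_image.1 hb
    exact haC z (ht z hz) c hc
  have hPX : polygon (t.image a) x₀ ⊆ interior X := by
    refine (convex_polygon _ _).isPreconnected.subset_interior_of_inter_closure ?_
      ⟨x₀, hCP hx₀C, subset_closure (interior_subset hx₀)⟩
    refine disjoint_left.2 fun w hw hwX ↦ ?_
    obtain ⟨z, hz, hzw⟩ := mem_iUnion₂.1 (hcov hwX)
    exact (hw (a z) (Finset.mem_image_of_mem a hz)).not_gt hzw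
  refine ⟨t.image a, fun b hb ↦ ?_, hPX.trans interior_subset,
    interior_mono hCP (hKC (mem_insert _ _)), ?_⟩
  · obtain ⟨z, hz, rfl⟩ := Finset.mem_image.1 hb
    exact ha0 z (ht z hz)
  · calc volume (closure X \ polygon (t.image a) x₀)
        ≤ volume (frontier X ∪ interior X \ K) := by
          refine measure_mono fun x ⟨hx, hxP⟩ ↦ ?_
          by_cases hxi : x ∈ interior X
          · exact Or.inr ⟨hxi, fun h ↦ hxP (hCP (interior_subset (hKC (mem_insert_of_mem _ h))))⟩
          · exact Or.inl ⟨hx, hxi⟩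
      _ ≤ volume (frontier X) + volume (interior X \ K) := measure_union_le _ _
      _ ≤ ε := by
          rw [hXc.addHaar_frontier volume, zero_add]
          exact hKvol.le

lemma volume_needleAngles_le (X : Set Plane) (l : ℝ) (x : Plane) :
    volume (needleAngles X l x) ≤ ENNReal.ofReal (2 * π) :=
  (measure_mono (sep_subset _ _)).trans (by simp)

lemma measurableSet_needleAngles_graph {M : Set Plane} (hM : MeasurableSet M) (l : ℝ) :
    MeasurableSet {q : Plane × ℝ | q.2 ∈ needleAngles M l q.1} := by
  refine (measurable_snd measurableSet_Ico).inter (?_ : MeasurableSet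
    ((fun q : Plane × ℝ ↦ q.1 + l • needleDir q.2) ⁻¹' M))
  have := continuous_needleDir
  exact (by fun_prop : Continuous fun q : Plane × ℝ ↦ q.1 + l • needleDir q.2).measurable hM

lemma lintegral_volume_needleAngles_le {M : Set Plane} (hM : MeasurableSet M) (l : ℝ) :
    ∫⁻ x, volume (needleAngles M l x) ≤ ENNReal.ofReal (2 * π) * volume M := by
  have hg := measurableSet_needleAngles_graph hM l
  calc ∫⁻ x, volume (needleAngles M l x)
      = (volume : Measure (Plane × ℝ)) {q : Plane × ℝ | q.2 ∈ needleAngles M l q.1} := by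
        rw [Measure.volume_eq_prod, Measure.prod_apply hg]
        rfl
    _ = ∫⁻ θ, volume {x : Plane | θ ∈ needleAngles M l x} := by
        rw [Measure.volume_eq_prod, Measure.prod_apply_symm hg]
        rfl
    _ ≤ ∫⁻ θ in Ico 0 (2 * π), volume M := by
        rw [← lintegral_indicator measurableSet_Ico]
        refine lintegral_mono fun θ ↦ ?_
        by_cases hθ : θ ∈ Ico 0 (2 * π)
        · rw [indicator_of_mem hθ, ← measure_preimage_add_right volume (l • needleDir θ) M]
          exact measure_mono fun x hx ↦ hx.2
        · simp only [needleAngles, mem_ofPred_eq, hθ, false_and, ofPred_false, measure_empty,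
            zero_le]
    _ = ENNReal.ofReal (2 * π) * volume M := by simp [mul_comm]

lemma lintegral_sdiff_innerParallel_le {X : Set Plane} (hXb : Bornology.IsBounded X)
    (hXc : Convex ℝ X) {l : ℝ} (hl : 0 ≤ l) :
    ∫⁻ x in X \ innerParallel X l, volume (needleAngles X l x) ≤
      μH[1] (frontier X) * ENNReal.ofReal (2 * π * l - 2 * l) := by
  rcases (interior X).eq_empty_or_nonempty with hempty | ⟨x₀, hx₀⟩
  · have hX0 : volume X = 0 := by
      refine measure_mono_null (fun x hx ↦ ?_) (hXc.addHaar_frontier volume)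
      exact ⟨subset_closure hx, by simp [hempty]⟩
    rw [setLIntegral_measure_zero _ _ (measure_mono_null sdiff_subset hX0)]
    exact zero_le
  refine ENNReal.le_of_forall_pos_le_add fun ε hε _ ↦ ?_
  obtain ⟨S, hS, hPX, hx₀P, hvol⟩ := exists_polygon_subset hXb hXc hx₀
    (ε := ε / (2 * ENNReal.ofReal (2 * π)))
    (ENNReal.div_pos (by simpa using hε.ne') (by finiteness)).ne'
  set P := polygon S x₀
  set M := closure X \ P
  have hM : MeasurableSet M := measurableSet_closure.diff (isClosed_polygon S x₀).measurableSet
  have hsub : X \ innerParallel X l ⊆ (P \ innerParallel P l) ∪ M := fun x ⟨hx, hxl⟩ ↦ by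
    by_cases hxP : x ∈ P
    · exact Or.inl ⟨hxP, fun h ↦ hxl (h.trans hPX)⟩
    · exact Or.inr ⟨subset_closure hx, hxP⟩
  have hsplit : ∀ x, volume (needleAngles X l x) ≤
      volume (needleAngles P l x) + volume (needleAngles M l x) := fun x ↦ by
    refine (measure_mono fun θ hθ ↦ ?_).trans (measure_union_le _ _)
    by_cases hP : x + l • needleDir θ ∈ P
    · exact Or.inl ⟨hθ.1, hP⟩
    · exact Or.inr ⟨hθ.1, subset_closure hθ.2, hP⟩
  have hMm : Measurable fun x ↦ volume (needleAngles M l x) :=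
    measurable_measure_prodMk_left (measurableSet_needleAngles_graph hM l)
  calc ∫⁻ x in X \ innerParallel X l, volume (needleAngles X l x)
      ≤ (∫⁻ x in P \ innerParallel P l, volume (needleAngles X l x)) +
        ∫⁻ x in M, volume (needleAngles X l x) :=
        (lintegral_mono_set hsub).trans (lintegral_union_le _ _ _)
    _ ≤ ((∫⁻ x in P \ innerParallel P l, volume (needleAngles P l x)) +
        ∫⁻ x, volume (needleAngles M l x)) + ENNReal.ofReal (2 * π) * volume M := by
        gcongr
        · refine (lintegral_mono hsplit).trans ?_
          rw [lintegral_add_right _ hMm]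
          gcongr
          exact Measure.restrict_le_self
        · exact (lintegral_mono fun x ↦ volume_needleAngles_le X l x).trans (by simp)
    _ ≤ (μH[1] (frontier X) * ENNReal.ofReal (2 * π * l - 2 * l) +
        ENNReal.ofReal (2 * π) * volume M) + ENNReal.ofReal (2 * π) * volume M := by
        gcongr
        · refine (lintegral_polygon_le hS (hXb.subset hPX) hl).trans ?_
          exact mul_le_mul_left (hausdorffMeasure_frontier_mono (convex_polygon S x₀)
            (isClosed_polygon S x₀) ⟨x₀, hx₀P⟩ hPX hXb zero_le_one) _
        · exact lintegral_volume_needleAngles_le hM l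
    _ = μH[1] (frontier X) * ENNReal.ofReal (2 * π * l - 2 * l) +
        2 * ENNReal.ofReal (2 * π) * volume M := by ring
    _ ≤ _ := by
        gcongr
        exact (mul_le_mul_right hvol _).trans ENNReal.mul_div_le

/-- the integral of the pointwise probability over `X \ X_l` is at most
`2πl − 2l` for a bounded convex set of perimeter `2π`. -/
theorem integral_pointwiseProb_le (X : Set Plane) (hXb : Bornology.IsBounded X)
    (hXc : Convex ℝ X) (hper : μH[1] (frontier X) = ENNReal.ofReal (2 * π))
    (l : ℝ) (hl : 0 < l) :
    ∫ x in X \ innerParallel X l, pointwiseProb X x l ≤ 2 * π * l - 2 * l := by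
  have hnn : 0 ≤ 2 * π * l - 2 * l := by nlinarith [pi_gt_three]
  by_cases hm : AEStronglyMeasurable (fun x ↦ pointwiseProb X x l)
      (volume.restrict (X \ innerParallel X l))
  swap
  · rwa [integral_non_aestronglyMeasurable hm]
  rw [integral_eq_lintegral_of_nonneg_ae
    (ae_of_all _ fun x ↦ by unfold pointwiseProb; positivity) hm]
  refine ENNReal.toReal_le_of_le_ofReal hnn ?_
  have hpos : (0 : ℝ) ≤ 1 / (2 * π) := by positivity
  have hpt : ∀ x, ENNReal.ofReal (pointwiseProb X x l) =
      ENNReal.ofReal (1 / (2 * π)) * volume (needleAngles X l x) := fun x ↦ by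
    rw [pointwiseProb, ENNReal.ofReal_mul hpos, ENNReal.ofReal_toReal
      (ne_top_of_le_ne_top ENNReal.ofReal_ne_top (volume_needleAngles_le X l x))]
  simp_rw [hpt]
  rw [lintegral_const_mul' _ _ ENNReal.ofReal_ne_top]
  calc _ ≤ ENNReal.ofReal (1 / (2 * π)) *
        (ENNReal.ofReal (2 * π) * ENNReal.ofReal (2 * π * l - 2 * l)) := by
        gcongr
        exact hper ▸ lintegral_sdiff_innerParallel_le hXb hXc hl.le
    _ = _ := by
        rw [← mul_assoc, ← ENNReal.ofReal_mul hpos, one_div_mul_cancel two_pi_pos.ne',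
          ENNReal.ofReal_one, one_mul]
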